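/- Let Ω ⊂ ℝⁿ be open, T > 0. Let F(x,t,r,p,X) be degenerate elliptic, defined for a.e. t ∈ (0,T) and all (x,r,p,X) ∈ Ω × ℝ × ℝⁿ × S(n), continuous in (x,r,p,X) for a.e. t, with t ↦ F(x,t,r,p,X) ∈ L¹(0,T), and satisfying property (M). Let H : ℝⁿ → ℝ be locally Lipschitz continuous. Let (w_ε)_ε be C¹ functions on [0,T] with ‖ẇ_ε‖_{L¹(0,T)} uniformly bounded in ε, converging uniformly on [0,T] to an absolutely continuous function w with ẇ ∈ L¹(0,T). If (u^ε)_ε is a sequence of locally uniformly bounded L¹-viscosity subsolutions of u^ε_t + F(x,t,u^ε,Du^ε,D²u^ε) + ẇ_ε(t) H(Du^ε) = 0 in Ω × (0,T), then ū := limsup* u^ε is an L¹-viscosity subsolution of u_t + F(x,t,u,Du,D²u) + ẇ(t) H(Du) = 0 in Ω × (0,T). -/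

import Mathlib

open Filter MeasureTheory Topology

attribute [local instance] Matrix.normedAddCommGroup

/-- The Euclidean space ℝⁿ. -/
abbrev Euc (n : ℕ) := EuclideanSpace ℝ (Fin n)

/-- The space S(n) of n×n real symmetric matrices. -/
abbrev SymMat (n : ℕ) := {X : Matrix (Fin n) (Fin n) ℝ // X.IsSymm}

/-- The matrix order X ≤ Y on symmetric matrices: Y - X is positive semidefinite. -/
def symLE {n : ℕ} (X Y : SymMat n) : Prop := (Y.1 - X.1).PosSemidef

/-- A modulus `m : (0,T) × ℝ⁺ → ℝ⁺` with `m(·,r) ∈ L¹(0,T)`, `m(t,·)` nondecreasing and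
`m(·,r) → 0` in `L¹(0,T)` as `r → 0⁺`. -/
structure IsModulus (T : ℝ) (m : ℝ → ℝ → ℝ) : Prop where
  nonneg : ∀ t r, 0 ≤ m t r
  integrable : ∀ r, 0 ≤ r → IntegrableOn (fun t => m t r) (Set.Ioo 0 T)
  mono : ∀ t, Monotone (m t)
  l1_tendsto : Tendsto (fun r => ∫ t in Set.Ioo 0 T, m t r) (𝓝[>] 0) (𝓝 0)

/-- `H` satisfies the estimate of property M(K) on the set `K` with modulus `m`. -/
def SatisfiesMOn (n : ℕ) (T : ℝ) (H : Euc n → ℝ → ℝ → Euc n → SymMat n → ℝ)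
    (m : ℝ → ℝ → ℝ) (K : Set (Euc n × ℝ × Euc n × SymMat n)) : Prop :=
  ∀ᵐ t ∂(volume.restrict (Set.Ioo 0 T)),
    ∀ q₁ q₂ : Euc n × ℝ × Euc n × SymMat n, q₁ ∈ K → q₂ ∈ K →
      |H q₁.1 t q₁.2.1 q₁.2.2.1 q₁.2.2.2 - H q₂.1 t q₂.2.1 q₂.2.2.1 q₂.2.2.2| ≤
        m t (dist q₁.1 q₂.1 + dist q₁.2.1 q₂.2.1 + dist q₁.2.2.1 q₂.2.2.1 + dist q₁.2.2.2 q₂.2.2.2)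

/-- `H` satisfies property (M): property M(K) for every compact subset `K` of
`Ω × ℝ × ℝⁿ × S(n)`. -/
def PropM (n : ℕ) (T : ℝ) (Ω : Set (Euc n))
    (H : Euc n → ℝ → ℝ → Euc n → SymMat n → ℝ) : Prop :=
  ∀ K : Set (Euc n × ℝ × Euc n × SymMat n), IsCompact K →
    K ⊆ Ω ×ˢ (Set.univ : Set (ℝ × Euc n × SymMat n)) →
    ∃ m : ℝ → ℝ → ℝ, IsModulus T m ∧ SatisfiesMOn n T H m K

/-- `F(x,t,r,p,X)` is degenerate elliptic: for a.e. `t ∈ (0,T)`, it is nonincreasing in the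
matrix variable. -/
def DegenerateElliptic (n : ℕ) (T : ℝ) (F : Euc n → ℝ → ℝ → Euc n → SymMat n → ℝ) : Prop :=
  ∀ᵐ t ∂(volume.restrict (Set.Ioo 0 T)),
    ∀ x r p (X Y : SymMat n), symLE X Y → F x t r p Y ≤ F x t r p X

/-- The Hessian matrix of `φ` at `x` (with respect to the standard basis). -/
noncomputable def hessMat (n : ℕ) (φ : Euc n → ℝ) (x : Euc n) : Matrix (Fin n) (Fin n) ℝ :=
  Matrix.of fun i j =>
    iteratedFDeriv ℝ 2 φ x (![EuclideanSpace.single i 1, EuclideanSpace.single j 1])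

/-- The (symmetrized) Hessian of `φ` at `x`, as a symmetric matrix; for a `C²` function the
Hessian is symmetric, so the symmetrization is harmless. -/
noncomputable def symHess (n : ℕ) (φ : Euc n → ℝ) (x : Euc n) : SymMat n :=
  ⟨(2:ℝ)⁻¹ • (hessMat n φ x + Matrix.transpose (hessMat n φ x)), by
    unfold Matrix.IsSymm
    rw [Matrix.transpose_smul, Matrix.transpose_add, Matrix.transpose_transpose, add_comm]⟩

/-- `u` is an L¹-viscosity subsolution (in Ishii's sense) of
`u_t + F(x,t,u,Du,D²u) = 0` in `Ω × (0,T)`. -/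
def IsL1Subsolution (n : ℕ) (T : ℝ) (Ω : Set (Euc n))
    (F : Euc n → ℝ → ℝ → Euc n → SymMat n → ℝ) (u : Euc n → ℝ → ℝ) : Prop :=
  UpperSemicontinuousOn (fun p : Euc n × ℝ => u p.1 p.2) (Ω ×ˢ Set.Ioo 0 T) ∧
  ∀ φ : Euc n × ℝ → ℝ, ContDiff ℝ 2 φ →
  ∀ b : ℝ → ℝ, IntegrableOn b (Set.Ioo 0 T) →
  ∀ G : Euc n → ℝ → ℝ → Euc n → SymMat n → ℝ,
    Continuous (fun q : Euc n × ℝ × ℝ × Euc n × SymMat n =>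
      G q.1 q.2.1 q.2.2.1 q.2.2.2.1 q.2.2.2.2) →
  ∀ x₀ t₀, (x₀, t₀) ∈ Ω ×ˢ Set.Ioo 0 T →
    (∃ U ∈ 𝓝 (x₀, u x₀ t₀, gradient (fun y => φ (y, t₀)) x₀, symHess n (fun y => φ (y, t₀)) x₀),
      ∃ I ∈ 𝓝 t₀, ∀ᵐ s ∂(volume : Measure ℝ), s ∈ I →
        ∀ y v q M, (y, v, q, M) ∈ U → b s + G y s v q M ≤ F y s v q M) →
    IsLocalMaxOn
      (fun p : Euc n × ℝ => u p.1 p.2 - φ p + ∫ s in Set.Ioo 0 p.2, b s)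
      (Ω ×ˢ Set.Ioo 0 T) (x₀, t₀) →
    deriv (fun s => φ (x₀, s)) t₀ +
      G x₀ t₀ (u x₀ t₀) (gradient (fun y => φ (y, t₀)) x₀)
        (symHess n (fun y => φ (y, t₀)) x₀) ≤ 0

/-- The half-relaxed upper limit `limsup* u^ε (x,t)` over the domain `D`. -/
noncomputable def limsupStar (n : ℕ) (D : Set (Euc n × ℝ)) (u : ℝ → Euc n → ℝ → ℝ)
    (x : Euc n) (t : ℝ) : ℝ :=
  Filter.limsup (fun q : ℝ × (Euc n × ℝ) => u q.1 q.2.1 q.2.2) ((𝓝[>] (0:ℝ)) ×ˢ 𝓝[D] (x, t))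

/-- The family `(u^ε)_{ε>0}` is locally uniformly bounded on `D`. -/
def LocUnifBounded (n : ℕ) (D : Set (Euc n × ℝ)) (u : ℝ → Euc n → ℝ → ℝ) : Prop :=
  ∀ K ⊆ D, IsCompact K → ∃ C : ℝ, ∀ ε > (0:ℝ), ∀ p ∈ K, |u ε p.1 p.2| ≤ C


/-! ### Slices of C² functions -/

/-- spatial gradient of a space-time function -/
noncomputable def grS {n : ℕ} (ψ : Euc n × ℝ → ℝ) (p : Euc n × ℝ) : Euc n :=
  (InnerProductSpace.toDual ℝ (Euc n)).symm
    ((fderiv ℝ ψ p).comp (ContinuousLinearMap.inl ℝ (Euc n) ℝ))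

/-- time derivative of a space-time function -/
noncomputable def dtS {n : ℕ} (ψ : Euc n × ℝ → ℝ) (p : Euc n × ℝ) : ℝ :=
  fderiv ℝ ψ p (0, 1)

/-- symmetrized spatial Hessian of a space-time function -/
noncomputable def hsS {n : ℕ} (ψ : Euc n × ℝ → ℝ) (p : Euc n × ℝ) : Matrix (Fin n) (Fin n) ℝ :=
  Matrix.of fun i j => (2:ℝ)⁻¹ *
    (fderiv ℝ (fderiv ℝ ψ) p (EuclideanSpace.single i 1, 0) (EuclideanSpace.single j 1, 0) +
     fderiv ℝ (fderiv ℝ ψ) p (EuclideanSpace.single j 1, 0) (EuclideanSpace.single i 1, 0))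

lemma slice_hasFDerivAt {n : ℕ} (x : Euc n) (t : ℝ) :
    HasFDerivAt (fun y : Euc n => (y, t)) (ContinuousLinearMap.inl ℝ (Euc n) ℝ) x := by
  have := (hasFDerivAt_id (𝕜 := ℝ) x).prodMk (hasFDerivAt_const t x)
  exact this

lemma slice_fderiv {n : ℕ} {ψ : Euc n × ℝ → ℝ} (hψ : Differentiable ℝ ψ) (x : Euc n) (t : ℝ) :
    fderiv ℝ (fun y => ψ (y, t)) x =
      (fderiv ℝ ψ (x, t)).comp (ContinuousLinearMap.inl ℝ (Euc n) ℝ) :=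
  ((hψ (x, t)).hasFDerivAt.comp x (slice_hasFDerivAt x t)).fderiv

lemma gradient_slice {n : ℕ} {ψ : Euc n × ℝ → ℝ} (hψ : Differentiable ℝ ψ) (x : Euc n) (t : ℝ) :
    gradient (fun y => ψ (y, t)) x = grS ψ (x, t) := by
  unfold gradient grS
  rw [slice_fderiv hψ]

lemma deriv_slice {n : ℕ} {ψ : Euc n × ℝ → ℝ} (hψ : Differentiable ℝ ψ) (x : Euc n) (t : ℝ) :
    deriv (fun s => ψ (x, s)) t = dtS ψ (x, t) := by
  have h1 : HasDerivAt (fun s : ℝ => (x, s)) ((0 : Euc n), (1:ℝ)) t :=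
    (hasDerivAt_const t x).prodMk (hasDerivAt_id t)
  exact ((hψ (x, t)).hasFDerivAt.comp_hasDerivAt t h1).deriv

lemma hess_slice {n : ℕ} {ψ : Euc n × ℝ → ℝ} (hψ : ContDiff ℝ 2 ψ) (x : Euc n) (t : ℝ) :
    (symHess n (fun y => ψ (y, t)) x).1 = hsS ψ (x, t) := by
  have hd : Differentiable ℝ ψ := hψ.differentiable (by norm_num)
  have hd2 : Differentiable ℝ (fderiv ℝ ψ) :=
    (hψ.fderiv_right (m := 1) (by norm_num)).differentiable (by norm_num)
  have key : ∀ v w : Euc n, fderiv ℝ (fderiv ℝ (fun y => ψ (y, t))) x v w =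
      fderiv ℝ (fderiv ℝ ψ) (x, t) (v, 0) (w, 0) := by
    intro v w
    have e : fderiv ℝ (fun y => ψ (y, t)) = fun y =>
        ((ContinuousLinearMap.compL ℝ (Euc n) (Euc n × ℝ) ℝ).flip
          (ContinuousLinearMap.inl ℝ (Euc n) ℝ)) (fderiv ℝ ψ (y, t)) := by
      funext y
      rw [slice_fderiv hd]; rfl
    have h2 : HasFDerivAt (fun y : Euc n => fderiv ℝ ψ (y, t))
        ((fderiv ℝ (fderiv ℝ ψ) (x, t)).comp (ContinuousLinearMap.inl ℝ (Euc n) ℝ)) x :=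
      (hd2 (x, t)).hasFDerivAt.comp x (slice_hasFDerivAt x t)
    have h3 := (((ContinuousLinearMap.compL ℝ (Euc n) (Euc n × ℝ) ℝ).flip
          (ContinuousLinearMap.inl ℝ (Euc n) ℝ)).hasFDerivAt.comp x h2).fderiv
    rw [e]
    erw [h3]
    simp
  ext i j
  simp [symHess, hessMat, hsS, iteratedFDeriv_two_apply, key]
  ring

lemma fderiv2_cont {n : ℕ} {ψ : Euc n × ℝ → ℝ} (hψ : ContDiff ℝ 2 ψ) :
    Continuous (fderiv ℝ (fderiv ℝ ψ)) :=
  (hψ.fderiv_right (m := 1) (by norm_num)).continuous_fderiv (by norm_num)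

lemma grS_cont {n : ℕ} {ψ : Euc n × ℝ → ℝ} (hψ : ContDiff ℝ 2 ψ) : Continuous (grS ψ) := by
  have := hψ.continuous_fderiv (by norm_num)
  unfold grS
  refine (LinearIsometryEquiv.continuous _).comp ?_
  exact this.clm_comp continuous_const

lemma dtS_cont {n : ℕ} {ψ : Euc n × ℝ → ℝ} (hψ : ContDiff ℝ 2 ψ) : Continuous (dtS ψ) := by
  have := hψ.continuous_fderiv (by norm_num)
  unfold dtS
  exact this.clm_apply continuous_const

lemma hsS_cont {n : ℕ} {ψ : Euc n × ℝ → ℝ} (hψ : ContDiff ℝ 2 ψ) : Continuous (hsS ψ) := by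
  have := fderiv2_cont hψ
  unfold hsS
  refine continuous_matrix fun i j => ?_
  simp only [Matrix.of_apply]
  fun_prop

lemma grS_sub {n : ℕ} {ψ h : Euc n × ℝ → ℝ} (hψ : ContDiff ℝ 2 ψ) (hh : ContDiff ℝ 2 h) (c : ℝ)
    (p : Euc n × ℝ) : grS (fun p => ψ p - c * h p) p = grS ψ p - c • grS h p := by
  have hd : Differentiable ℝ ψ := hψ.differentiable (by norm_num)
  have hd' : Differentiable ℝ h := hh.differentiable (by norm_num)
  have e : fderiv ℝ (fun p => ψ p - c * h p) p = fderiv ℝ ψ p - c • fderiv ℝ h p :=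
    ((hd p).hasFDerivAt.sub ((hd' p).hasFDerivAt.const_mul c)).fderiv
  unfold grS
  rw [e]
  simp [ContinuousLinearMap.sub_comp]

lemma hsS_sub {n : ℕ} {ψ h : Euc n × ℝ → ℝ} (hψ : ContDiff ℝ 2 ψ) (hh : ContDiff ℝ 2 h) (c : ℝ)
    (p : Euc n × ℝ) : hsS (fun p => ψ p - c * h p) p = hsS ψ p - c • hsS h p := by
  have hd : Differentiable ℝ ψ := hψ.differentiable (by norm_num)
  have hd' : Differentiable ℝ h := hh.differentiable (by norm_num)
  have hd2 : Differentiable ℝ (fderiv ℝ ψ) :=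
    (hψ.fderiv_right (m := 1) (by norm_num)).differentiable (by norm_num)
  have hd2' : Differentiable ℝ (fderiv ℝ h) :=
    (hh.fderiv_right (m := 1) (by norm_num)).differentiable (by norm_num)
  have e : fderiv ℝ (fun p => ψ p - c * h p) = fun p => fderiv ℝ ψ p - c • fderiv ℝ h p := by
    funext p
    exact ((hd p).hasFDerivAt.sub ((hd' p).hasFDerivAt.const_mul c)).fderiv
  have e2 : fderiv ℝ (fun p => fderiv ℝ ψ p - c • fderiv ℝ h p) p =
      fderiv ℝ (fderiv ℝ ψ) p - c • fderiv ℝ (fderiv ℝ h) p :=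
    ((hd2 p).hasFDerivAt.sub ((hd2' p).hasFDerivAt.const_smul c)).fderiv
  unfold hsS
  rw [e, e2]
  ext i j
  simp
  ring

/-- quartic penalty -/
noncomputable def pen {n : ℕ} (p₀ p : Euc n × ℝ) : ℝ := (‖p.1 - p₀.1‖ ^ 2 + (p.2 - p₀.2) ^ 2)

lemma pen_contDiff {n : ℕ} (p₀ : Euc n × ℝ) : ContDiff ℝ 2 (pen p₀) := by
  unfold pen
  exact ((contDiff_fst.sub contDiff_const).norm_sq ℝ).add
    ((contDiff_snd.sub contDiff_const).pow 2)

lemma pen_nonneg {n : ℕ} (p₀ p : Euc n × ℝ) : 0 ≤ pen p₀ p := by unfold pen; positivity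

lemma pen_eq_zero {n : ℕ} {p₀ p : Euc n × ℝ} (h : pen p₀ p ≤ 0) : p = p₀ := by
  unfold pen at h
  have h1 : ‖p.1 - p₀.1‖ ^ 2 = 0 := by nlinarith [sq_nonneg ‖p.1 - p₀.1‖, sq_nonneg (p.2 - p₀.2)]
  have h2 : (p.2 - p₀.2) ^ 2 = 0 := by nlinarith [sq_nonneg ‖p.1 - p₀.1‖, sq_nonneg (p.2 - p₀.2)]
  have h3 : p.1 - p₀.1 = 0 := by simpa using h1
  have h4 : p.2 - p₀.2 = 0 := by simpa using h2
  exact Prod.ext (sub_eq_zero.1 h3) (sub_eq_zero.1 h4)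

lemma pen_self {n : ℕ} (p₀ : Euc n × ℝ) : pen p₀ p₀ = 0 := by simp [pen]

lemma pen_fderiv {n : ℕ} (p₀ : Euc n × ℝ) : fderiv ℝ (pen p₀) p₀ = 0 := by
  apply IsLocalMin.fderiv_eq_zero
  exact Filter.Eventually.of_forall fun p => by rw [pen_self]; exact pen_nonneg _ _

lemma pensq_fderiv {n : ℕ} (p₀ : Euc n × ℝ) : fderiv ℝ (fun p => pen p₀ p ^ 2) =
    fun p => (2 * pen p₀ p) • fderiv ℝ (pen p₀) p := by
  funext p
  have hd : Differentiable ℝ (pen p₀) := (pen_contDiff p₀).differentiable (by norm_num)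
  have := ((hd p).hasFDerivAt.pow 2).fderiv
  simpa using this

lemma pensq_fderiv2 {n : ℕ} (p₀ : Euc n × ℝ) :
    fderiv ℝ (fderiv ℝ (fun p => pen p₀ p ^ 2)) p₀ = 0 := by
  rw [pensq_fderiv]
  have hd : Differentiable ℝ (pen p₀) := (pen_contDiff p₀).differentiable (by norm_num)
  have hd2 : Differentiable ℝ (fderiv ℝ (pen p₀)) :=
    ((pen_contDiff p₀).fderiv_right (m := 1) (by norm_num)).differentiable (by norm_num)
  have := (((hd p₀).hasFDerivAt.const_mul 2).smul (hd2 p₀).hasFDerivAt).fderiv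
  erw [this]
  simp [pen_self, pen_fderiv]

lemma penalized_jet {n : ℕ} {φ : Euc n × ℝ → ℝ} (hφ : ContDiff ℝ 2 φ) (p₀ : Euc n × ℝ) :
    grS (fun p => φ p + pen p₀ p ^ 2) p₀ = grS φ p₀ ∧
    dtS (fun p => φ p + pen p₀ p ^ 2) p₀ = dtS φ p₀ ∧
    hsS (fun p => φ p + pen p₀ p ^ 2) p₀ = hsS φ p₀ := by
  have hq : ContDiff ℝ 2 (fun p => pen p₀ p ^ 2) := (pen_contDiff p₀).pow 2
  have hd : Differentiable ℝ φ := hφ.differentiable (by norm_num)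
  have hd' : Differentiable ℝ (fun p => pen p₀ p ^ 2) := hq.differentiable (by norm_num)
  have hd2 : Differentiable ℝ (fderiv ℝ φ) :=
    (hφ.fderiv_right (m := 1) (by norm_num)).differentiable (by norm_num)
  have hd2' : Differentiable ℝ (fderiv ℝ (fun p => pen p₀ p ^ 2)) :=
    (hq.fderiv_right (m := 1) (by norm_num)).differentiable (by norm_num)
  have e : fderiv ℝ (fun p => φ p + pen p₀ p ^ 2) =
      fun p => fderiv ℝ φ p + fderiv ℝ (fun p => pen p₀ p ^ 2) p := by
    funext p
    exact ((hd p).hasFDerivAt.add (hd' p).hasFDerivAt).fderiv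
  have e1 : fderiv ℝ (fun p => φ p + pen p₀ p ^ 2) p₀ = fderiv ℝ φ p₀ := by
    rw [e]; simp [pensq_fderiv, pen_self]
  have e2 : fderiv ℝ (fderiv ℝ (fun p => φ p + pen p₀ p ^ 2)) p₀ = fderiv ℝ (fderiv ℝ φ) p₀ := by
    rw [e]
    have := ((hd2 p₀).hasFDerivAt.add (hd2' p₀).hasFDerivAt).fderiv
    erw [this, pensq_fderiv2, add_zero]
  refine ⟨?_, ?_, ?_⟩
  · unfold grS; rw [e1]
  · unfold dtS; rw [e1]
  · unfold hsS; rw [e2]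

/-! ### Approximation in time -/

lemma time_approx {T : ℝ} {f : ℝ → ℝ} (hf : IntegrableOn f (Set.Ioo 0 T)) {τ : ℝ}
    (hτ : 0 < τ) :
    ∃ g z : ℝ → ℝ, ContDiff ℝ 2 z ∧ Continuous g ∧ (∀ t, HasDerivAt z (g t) t) ∧
      IntegrableOn g (Set.Ioo 0 T) ∧ ∫ s in Set.Ioo 0 T, |f s - g s| ≤ τ ∧
      ∀ t ∈ Set.Ioo 0 T, |z t - ∫ s in (0:ℝ)..t, f s| ≤ τ := by
  obtain ⟨g, hg1, hg2, hg3⟩ := MeasureTheory.MemLp.exist_eLpNorm_sub_le (p := 1)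
    (by simp) le_rfl (memLp_one_iff_integrable.2 hf) hτ
  have hgc : Continuous g := hg2.continuous
  have hgi : Integrable g := hgc.integrable_of_hasCompactSupport hg1
  have hgi' : IntegrableOn g (Set.Ioo 0 T) := hgi.integrableOn
  have hle : ∫ s in Set.Ioo 0 T, |f s - g s| ≤ τ := by
    have h1 : Integrable (f - g) (volume.restrict (Set.Ioo 0 T)) := Integrable.sub hf hgi'
    have h2 := integral_norm_eq_lintegral_enorm h1.aestronglyMeasurable
    rw [← eLpNorm_one_eq_lintegral_enorm] at h2
    have h3 := ENNReal.toReal_mono (by simp) hg3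
    rw [ENNReal.toReal_ofReal hτ.le, ← h2] at h3
    simpa using h3
  have hder : ∀ t, HasDerivAt (fun t => ∫ s in (0:ℝ)..t, g s) (g t) t := fun t =>
    intervalIntegral.integral_hasDerivAt_right (hgc.intervalIntegrable _ _)
      (hgc.stronglyMeasurableAtFilter _ _) hgc.continuousAt
  refine ⟨g, fun t => ∫ s in (0:ℝ)..t, g s, ?_, hgc, hder, hgi', hle, ?_⟩
  · have : ContDiff ℝ (1 + 1) (fun t => ∫ s in (0:ℝ)..t, g s) := by
      rw [contDiff_succ_iff_deriv]
      refine ⟨fun t => (hder t).differentiableAt, by simp, ?_⟩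
      have : deriv (fun t => ∫ s in (0:ℝ)..t, g s) = g := funext fun t => (hder t).deriv
      rw [this]
      exact hg2.of_le (by exact_mod_cast le_top)
    simpa [one_add_one_eq_two] using this
  · intro t ht
    have hfi : IntervalIntegrable f volume 0 t := by
      rw [intervalIntegrable_iff_integrableOn_Ioo_of_le ht.1.le]
      exact hf.mono_set (Set.Ioo_subset_Ioo le_rfl ht.2.le)
    rw [← intervalIntegral.integral_sub (hgc.intervalIntegrable _ _) hfi]
    refine le_trans ?_ hle
    rw [intervalIntegral.integral_of_le ht.1.le, ← integral_Ioc_eq_integral_Ioo (x := (0:ℝ))]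
    refine (abs_integral_le_integral_abs).trans ?_
    have : (fun s => |g s - f s|) = fun s => |f s - g s| := funext fun s => abs_sub_comm _ _
    rw [this]
    refine setIntegral_mono_set ?_ ?_ ?_
    · rw [integrableOn_Ioc_iff_integrableOn_Ioo]
      exact (Integrable.sub hf hgi').abs
    · exact Eventually.of_forall fun s => abs_nonneg _
    · exact (Set.Ioc_subset_Ioc_right ht.2.le).eventuallyLE

lemma we_approx {T : ℝ}
    (we : ℝ → ℝ → ℝ) (we' : ℝ → ℝ → ℝ)
    (hC1 : ∀ ε > (0:ℝ), ContinuousOn (we' ε) (Set.Icc 0 T) ∧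
      ∀ t ∈ Set.Icc 0 T, HasDerivWithinAt (we ε) (we' ε t) (Set.Icc 0 T) t)
    (hL1bd : ∃ C : ℝ, ∀ ε > (0:ℝ), ∫ s in Set.Ioo 0 T, |we' ε s| ≤ C)
    (w : ℝ → ℝ)
    (hconv : TendstoUniformlyOn we w (𝓝[>] (0:ℝ)) (Set.Icc 0 T))
    (w' : ℝ → ℝ) (hw'int : IntegrableOn w' (Set.Ioo 0 T))
    (hAC : ∀ t ∈ Set.Icc 0 T, w t = w 0 + ∫ s in (0:ℝ)..t, w' s) :
    ∃ C₀ : ℝ, 0 ≤ C₀ ∧ ∀ τ : ℝ, 0 < τ → τ < 1 → ∀ᶠ ε in 𝓝[>] (0:ℝ), 0 < ε ∧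
      IntegrableOn (we' ε) (Set.Ioo 0 T) ∧
      ∃ g z : ℝ → ℝ, ContDiff ℝ 2 z ∧ Continuous g ∧ (∀ t, HasDerivAt z (g t) t) ∧
      IntegrableOn g (Set.Ioo 0 T) ∧ ∫ s in Set.Ioo 0 T, |we' ε s - w' s - g s| ≤ τ ∧
      ∫ s in Set.Ioo 0 T, |g s| ≤ C₀ ∧
      ∀ t ∈ Set.Ioo 0 T, |z t| < τ := by
  obtain ⟨C, hC⟩ := hL1bd
  refine ⟨|C| + (∫ s in Set.Ioo 0 T, |w' s|) + 1, ?_, ?_⟩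
  · have : 0 ≤ ∫ s in Set.Ioo 0 T, |w' s| := integral_nonneg fun s => abs_nonneg _
    positivity
  · intro τ hτ hτ1
    have h4 : 0 < τ / 4 := by positivity
    filter_upwards [Metric.tendstoUniformlyOn_iff.1 hconv (τ / 4) h4, self_mem_nhdsWithin]
      with ε hε hε0
    have hε0' : 0 < ε := hε0
    obtain ⟨hc, hd⟩ := hC1 ε hε0'
    have hint : IntegrableOn (we' ε) (Set.Ioo 0 T) :=
      (hc.integrableOn_Icc).mono_set Set.Ioo_subset_Icc_self
    refine ⟨hε0', hint, ?_⟩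
    obtain ⟨g, z, hz, hg, hder, hgi, hle, hz2⟩ := time_approx (Integrable.sub hint hw'int) h4
    refine ⟨g, z, hz, hg, hder, hgi, ?_, ?_, ?_⟩
    · have : ∫ s in Set.Ioo 0 T, |we' ε s - w' s - g s| ≤ τ / 4 := hle
      linarith
    · have h1 : ∫ s in Set.Ioo 0 T, |g s| ≤ ∫ s in Set.Ioo 0 T,
          (|we' ε s| + |w' s| + |we' ε s - w' s - g s|) := by
        refine integral_mono hgi.abs ?_ ?_
        · exact (hint.abs.add hw'int.abs).add ((Integrable.sub hint hw'int).sub hgi).abs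
        · intro s
          have : g s = we' ε s - w' s - (we' ε s - w' s - g s) := by ring
          calc |g s| = |we' ε s - w' s - (we' ε s - w' s - g s)| := by rw [← this]
            _ ≤ |we' ε s - w' s| + |we' ε s - w' s - g s| := abs_sub _ _
            _ ≤ |we' ε s| + |w' s| + |we' ε s - w' s - g s| :=
              add_le_add (abs_sub _ _) le_rfl
      have e1 : ∫ s in Set.Ioo 0 T, (|we' ε s| + |w' s| + |we' ε s - w' s - g s|) =
          (∫ s in Set.Ioo 0 T, |we' ε s|) + (∫ s in Set.Ioo 0 T, |w' s|) +
          ∫ s in Set.Ioo 0 T, |we' ε s - w' s - g s| := by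
        rw [integral_add, integral_add hint.abs hw'int.abs]
        · exact hint.abs.add hw'int.abs
        · exact ((Integrable.sub hint hw'int).sub hgi).abs
      have h2 := hC ε hε0'
      have h3 : ∫ s in Set.Ioo 0 T, |we' ε s - w' s - g s| ≤ τ / 4 := hle
      have h5 := le_abs_self C
      linarith
    · intro t ht
      have hT : 0 < T := ht.1.trans ht.2
      have hfi : IntervalIntegrable (we' ε) volume 0 t := by
        rw [intervalIntegrable_iff_integrableOn_Ioo_of_le ht.1.le]
        exact hint.mono_set (Set.Ioo_subset_Ioo le_rfl ht.2.le)
      have hwi : IntervalIntegrable w' volume 0 t := by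
        rw [intervalIntegrable_iff_integrableOn_Ioo_of_le ht.1.le]
        exact hw'int.mono_set (Set.Ioo_subset_Ioo le_rfl ht.2.le)
      have h1 : ∫ s in (0:ℝ)..t, we' ε s = we ε t - we ε 0 := by
        refine intervalIntegral.integral_eq_sub_of_hasDerivAt_of_le ht.1.le ?_ ?_ hfi
        · intro s hs
          exact ((hd s ⟨hs.1, hs.2.trans ht.2.le⟩).continuousWithinAt).mono
            (Set.Icc_subset_Icc_right ht.2.le)
        · intro s hs
          exact (hd s ⟨hs.1.le, hs.2.le.trans ht.2.le⟩).hasDerivAt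
            (Icc_mem_nhds hs.1 (hs.2.trans ht.2))
      have h2 := hAC t ⟨ht.1.le, ht.2.le⟩
      have h3 := hz2 t ht
      have h6 : ∫ s in (0:ℝ)..t, (we' ε - w') s = (we ε t - we ε 0) - (w t - w 0) := by
        simp only [Pi.sub_apply]
        rw [intervalIntegral.integral_sub hfi hwi, h1]
        linarith
      rw [h6] at h3
      have h7 := hε t ⟨ht.1.le, ht.2.le⟩
      have h8 := hε 0 ⟨le_rfl, hT.le⟩
      rw [Real.dist_eq] at h7 h8
      rw [abs_lt] at h7 h8 ⊢
      rw [abs_le] at h3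
      constructor <;> linarith [h7.1, h7.2, h8.1, h8.2, h3.1, h3.2]

/-! ### The half-relaxed limit -/

lemma lsFilter_neBot {n : ℕ} {D : Set (Euc n × ℝ)} {p : Euc n × ℝ} (hp : p ∈ D) :
    ((𝓝[>] (0:ℝ)) ×ˢ 𝓝[D] p).NeBot := by
  have : (𝓝[D] p).NeBot := nhdsWithin_neBot_of_mem hp
  infer_instance

lemma ls_bounded {n : ℕ} {D : Set (Euc n × ℝ)} (hD : IsOpen D) {u : ℝ → Euc n → ℝ → ℝ}
    (hbd : LocUnifBounded n D u) {p : Euc n × ℝ} (hp : p ∈ D) :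
    ∃ C : ℝ, ∀ᶠ q : ℝ × (Euc n × ℝ) in (𝓝[>] (0:ℝ)) ×ˢ 𝓝[D] p, |u q.1 q.2.1 q.2.2| ≤ C := by
  obtain ⟨K, hK, hpK, hKD⟩ := exists_compact_subset hD hp
  obtain ⟨C, hC⟩ := hbd K hKD hK
  refine ⟨C, ?_⟩
  have h1 : ∀ᶠ e in 𝓝[>] (0:ℝ), 0 < e := self_mem_nhdsWithin
  have h2 : ∀ᶠ q in 𝓝[D] p, q ∈ K :=
    mem_nhdsWithin_of_mem_nhds (mem_interior_iff_mem_nhds.1 hpK)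
  filter_upwards [h1.prod_mk h2] with q hq
  exact hC q.1 hq.1 q.2 hq.2

lemma ls_bddle {n : ℕ} {D : Set (Euc n × ℝ)} (hD : IsOpen D) {u : ℝ → Euc n → ℝ → ℝ}
    (hbd : LocUnifBounded n D u) {p : Euc n × ℝ} (hp : p ∈ D) :
    IsBoundedUnder (· ≤ ·) ((𝓝[>] (0:ℝ)) ×ˢ 𝓝[D] p)
      (fun q : ℝ × (Euc n × ℝ) => u q.1 q.2.1 q.2.2) := by
  obtain ⟨C, hC⟩ := ls_bounded hD hbd hp
  exact ⟨C, by rw [eventually_map]; exact hC.mono fun q hq => (abs_le.1 hq).2⟩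

lemma ls_cobdd {n : ℕ} {D : Set (Euc n × ℝ)} (hD : IsOpen D) {u : ℝ → Euc n → ℝ → ℝ}
    (hbd : LocUnifBounded n D u) {p : Euc n × ℝ} (hp : p ∈ D) :
    IsCoboundedUnder (· ≤ ·) ((𝓝[>] (0:ℝ)) ×ˢ 𝓝[D] p)
      (fun q : ℝ × (Euc n × ℝ) => u q.1 q.2.1 q.2.2) := by
  obtain ⟨C, hC⟩ := ls_bounded hD hbd hp
  have := lsFilter_neBot hp
  have hb : IsBoundedUnder (· ≥ ·) ((𝓝[>] (0:ℝ)) ×ˢ 𝓝[D] p)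
      (fun q : ℝ × (Euc n × ℝ) => u q.1 q.2.1 q.2.2) :=
    ⟨-C, by rw [eventually_map]; exact hC.mono fun q hq => (abs_le.1 hq).1⟩
  exact hb.isCoboundedUnder_le

lemma ls_eventually_lt {n : ℕ} {D : Set (Euc n × ℝ)} (hD : IsOpen D) {u : ℝ → Euc n → ℝ → ℝ}
    (hbd : LocUnifBounded n D u) {p : Euc n × ℝ} (hp : p ∈ D) {c : ℝ}
    (h : limsupStar n D u p.1 p.2 < c) :
    ∀ᶠ q : ℝ × (Euc n × ℝ) in (𝓝[>] (0:ℝ)) ×ˢ 𝓝[D] p, u q.1 q.2.1 q.2.2 < c :=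
  eventually_lt_of_limsup_lt h (ls_bddle hD hbd hp)

lemma ls_frequently_gt {n : ℕ} {D : Set (Euc n × ℝ)} (hD : IsOpen D) {u : ℝ → Euc n → ℝ → ℝ}
    (hbd : LocUnifBounded n D u) {p : Euc n × ℝ} (hp : p ∈ D) {c : ℝ}
    (h : c < limsupStar n D u p.1 p.2) :
    ∃ᶠ q : ℝ × (Euc n × ℝ) in (𝓝[>] (0:ℝ)) ×ˢ 𝓝[D] p, c < u q.1 q.2.1 q.2.2 :=
  frequently_lt_of_lt_limsup (ls_cobdd hD hbd hp) h

lemma ls_usc {n : ℕ} {D : Set (Euc n × ℝ)} (hD : IsOpen D) {u : ℝ → Euc n → ℝ → ℝ}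
    (hbd : LocUnifBounded n D u) :
    UpperSemicontinuousOn (fun p : Euc n × ℝ => limsupStar n D u p.1 p.2) D := by
  intro p hp c hc
  obtain ⟨c', hc1, hc2⟩ := exists_between hc
  have h1 := ls_eventually_lt hD hbd hp hc1
  obtain ⟨P, hP, Q, hQ, hPQ⟩ := eventually_prod_iff.1 h1
  have hQ' := eventually_eventually_nhdsWithin.2 hQ
  filter_upwards [hQ', self_mem_nhdsWithin] with p' hp' hp'D
  refine lt_of_le_of_lt ?_ hc2
  refine limsup_le_of_le (ls_cobdd hD hbd hp'D) ?_
  filter_upwards [hP.prod_mk hp'] with q hq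
  exact (hPQ hq.1 hq.2).le

/-! ### Smooth approximation of `H(Dψ)` -/

lemma h_approx {n : ℕ} {ψ : Euc n × ℝ → ℝ} (hψ : ContDiff ℝ 2 ψ) {H : Euc n → ℝ}
    (hH : Continuous H) {N : Set (Euc n × ℝ)} (hN : IsCompact N) {δ : ℝ} (hδ : 0 < δ) :
    ∃ h : Euc n × ℝ → ℝ, ContDiff ℝ 2 h ∧ ∃ τ > 0, ∀ c : ℝ, |c| < τ → ∀ p ∈ N,
      |c * h p| < δ ∧ |c * dtS h p| < δ ∧ ‖c • grS h p‖ < δ ∧ ‖c • hsS h p‖ < δ ∧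
      |H (grS ψ p - c • grS h p) - h p| < δ := by
  obtain ⟨h, hh, hap, -⟩ := Continuous.exists_contDiff_approx (2 : ℕ∞)
    (hH.comp (grS_cont hψ)) (continuous_const (y := δ)) (fun _ => hδ)
  have hh' : ContDiff ℝ 2 h := hh
  refine ⟨h, hh', ?_⟩
  have c0 := hh'.continuous
  have c1 := dtS_cont hh'
  have c2 := grS_cont hh'
  have c3 := hsS_cont hh'
  have c4 := grS_cont hψ
  have key : ∀ᶠ c in 𝓝 (0:ℝ), ∀ p ∈ N,
      |c * h p| < δ ∧ |c * dtS h p| < δ ∧ ‖c • grS h p‖ < δ ∧ ‖c • hsS h p‖ < δ ∧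
      |H (grS ψ p - c • grS h p) - h p| < δ := by
    refine hN.eventually_forall_of_forall_eventually fun p hp => ?_
    refine Filter.Eventually.and ?_ (Filter.Eventually.and ?_ (Filter.Eventually.and ?_
      (Filter.Eventually.and ?_ ?_)))
    · have hc : Continuous (fun z : ℝ × (Euc n × ℝ) => |z.1 * h z.2|) := by fun_prop
      exact (hc.tendsto (0, p)).eventually_lt_const (by simpa using hδ)
    · have hc : Continuous (fun z : ℝ × (Euc n × ℝ) => |z.1 * dtS h z.2|) := by fun_prop
      exact (hc.tendsto (0, p)).eventually_lt_const (by simpa using hδ)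
    · have hc : Continuous (fun z : ℝ × (Euc n × ℝ) => ‖z.1 • grS h z.2‖) := by fun_prop
      exact (hc.tendsto (0, p)).eventually_lt_const (by simpa using hδ)
    · have hc1 : Continuous (fun z : ℝ × (Euc n × ℝ) => z.1 • hsS h z.2) := by fun_prop
      have hc : Continuous (fun z : ℝ × (Euc n × ℝ) => ‖z.1 • hsS h z.2‖) :=
        continuous_norm.comp hc1
      exact (hc.tendsto (0, p)).eventually_lt_const (by simpa using hδ)
    · have hc : Continuous (fun z : ℝ × (Euc n × ℝ) =>
          |H (grS ψ z.2 - z.1 • grS h z.2) - h z.2|) := by fun_prop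
      refine (hc.tendsto (0, p)).eventually_lt_const ?_
      have := hap p
      rw [dist_comm, Real.dist_eq] at this
      simpa using this
  obtain ⟨τ, hτ, hb⟩ := Metric.eventually_nhds_iff.1 key
  exact ⟨τ, hτ, fun c hc => hb (by simpa using hc)⟩

lemma prim_cont {T : ℝ} {b : ℝ → ℝ} (hb : IntegrableOn b (Set.Ioo 0 T)) :
    ContinuousOn (fun t => ∫ s in Set.Ioo 0 t, b s) (Set.Ioo 0 T) := by
  have h1 : IntegrableOn b (Set.Icc 0 T) := (integrableOn_Icc_iff_integrableOn_Ioo).2 hb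
  have h2 := intervalIntegral.continuousOn_primitive h1
  simp only [integral_Ioc_eq_integral_Ioo] at h2
  exact h2.mono Set.Ioo_subset_Icc_self

lemma prim_abs_le {T : ℝ} {f : ℝ → ℝ} (hf : IntegrableOn f (Set.Ioo 0 T)) {t : ℝ}
    (ht : t ∈ Set.Ioo 0 T) :
    0 ≤ ∫ s in Set.Ioo 0 t, |f s| ∧ ∫ s in Set.Ioo 0 t, |f s| ≤ ∫ s in Set.Ioo 0 T, |f s| := by
  refine ⟨integral_nonneg fun s => abs_nonneg _, ?_⟩
  refine setIntegral_mono_set hf.abs (Eventually.of_forall fun s => abs_nonneg _) ?_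
  exact (Set.Ioo_subset_Ioo_right ht.2.le).eventuallyLE

/-- One step: perturbed test function for one of the approximate equations. -/
lemma visc_step {n : ℕ} {T : ℝ} {Ω : Set (Euc n)}
    {F : Euc n → ℝ → ℝ → Euc n → SymMat n → ℝ} {H : Euc n → ℝ} (hH : Continuous H)
    {a w' g z : ℝ → ℝ} (ha : IntegrableOn a (Set.Ioo 0 T)) (hw' : IntegrableOn w' (Set.Ioo 0 T))
    (hg : Continuous g) (hgi : IntegrableOn g (Set.Ioo 0 T)) (hz : ContDiff ℝ 2 z)
    (hzg : ∀ t, HasDerivAt z (g t) t)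
    {v : Euc n → ℝ → ℝ}
    (hv : IsL1Subsolution n T Ω (fun x t r p X => F x t r p X + a t * H p) v)
    {N : Set (Euc n × ℝ)} (hN : IsCompact N) (hND : N ⊆ Ω ×ˢ Set.Ioo 0 T) (hNne : N.Nonempty)
    {ψ h : Euc n × ℝ → ℝ} (hψ : ContDiff ℝ 2 ψ) (hh : ContDiff ℝ 2 h)
    {δ CH C₀ : ℝ} (hδ : 0 < δ) (hCH : 0 ≤ CH)
    (hA : ∀ p ∈ N, |z p.2 * h p| < δ ∧ |z p.2 * dtS h p| < δ ∧ ‖z p.2 • grS h p‖ < δ ∧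
      ‖z p.2 • hsS h p‖ < δ ∧ |H (grS ψ p - z p.2 • grS h p) - h p| < δ)
    (herr : ∫ s in Set.Ioo 0 T, |a s - w' s - g s| ≤ δ)
    (hgC : ∫ s in Set.Ioo 0 T, |g s| ≤ C₀)
    {b : ℝ → ℝ} (hb : IntegrableOn b (Set.Ioo 0 T))
    {G : Euc n → ℝ → ℝ → Euc n → SymMat n → ℝ}
    (hG : Continuous (fun q : Euc n × ℝ × ℝ × Euc n × SymMat n =>
      G q.1 q.2.1 q.2.2.1 q.2.2.2.1 q.2.2.2.2))
    {U : Set (Euc n × ℝ × Euc n × SymMat n)} (hU : IsOpen U)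
    (hUH : ∀ y r q M, (y, r, q, M) ∈ U → |H q| ≤ CH)
    {I : Set ℝ} (hI : IsOpen I)
    (hFG : ∀ᵐ s ∂(volume : Measure ℝ), s ∈ I → ∀ y r q M, (y, r, q, M) ∈ U →
      b s + G y s r q M ≤ F y s r q M + w' s * H q) :
    ∃ p ∈ N, ∃ q : Euc n, ∃ M : SymMat n, ‖q - grS ψ p‖ < δ ∧ ‖M.1 - hsS ψ p‖ < δ ∧
      (∀ p' ∈ N, v p'.1 p'.2 - ψ p' + (∫ s in Set.Ioo 0 p'.2, b s) ≤
        v p.1 p.2 - ψ p + (∫ s in Set.Ioo 0 p.2, b s) + (CH + C₀ + 2) * δ) ∧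
      (p ∈ interior N → p.2 ∈ I → (p.1, v p.1 p.2, q, M) ∈ U →
        dtS ψ p + G p.1 p.2 (v p.1 p.2) q M ≤ δ) := by
  obtain ⟨husc, hvisc⟩ := hv
  set b' : ℝ → ℝ := fun s => b s - CH * |a s - w' s - g s| - δ * |g s| with hb'
  have herri : IntegrableOn (fun s => a s - w' s - g s) (Set.Ioo 0 T) :=
    (Integrable.sub ha hw').sub hgi
  have hb'i : IntegrableOn b' (Set.Ioo 0 T) :=
    (Integrable.sub hb (herri.abs.const_mul CH)).sub (hgi.abs.const_mul δ)
  have hB' : ∀ t ∈ Set.Ioo 0 T, (∫ s in Set.Ioo 0 t, b' s) ≤ (∫ s in Set.Ioo 0 t, b s) ∧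
      (∫ s in Set.Ioo 0 t, b s) - (CH + C₀) * δ ≤ (∫ s in Set.Ioo 0 t, b' s) := by
    intro t ht
    have hsub : Set.Ioo 0 t ⊆ Set.Ioo 0 T := Set.Ioo_subset_Ioo_right ht.2.le
    have e : ∫ s in Set.Ioo 0 t, b' s = (∫ s in Set.Ioo 0 t, b s) -
        CH * (∫ s in Set.Ioo 0 t, |a s - w' s - g s|) - δ * (∫ s in Set.Ioo 0 t, |g s|) := by
      have i1 : Integrable b (volume.restrict (Set.Ioo 0 t)) := hb.mono_set hsub
      have i2 : Integrable (fun s => CH * |a s - w' s - g s|) (volume.restrict (Set.Ioo 0 t)) :=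
        (IntegrableOn.mono_set herri hsub).abs.const_mul CH
      have i3 : Integrable (fun s => δ * |g s|) (volume.restrict (Set.Ioo 0 t)) :=
        (hgi.mono_set hsub).abs.const_mul δ
      have k1 := integral_sub (i1.sub i2) i3
      have k2 := integral_sub i1 i2
      rw [integral_const_mul] at k1 k2
      simp only [Pi.sub_apply] at k1
      rw [k2] at k1
      exact k1
    obtain ⟨e1, e2⟩ := prim_abs_le herri ht
    obtain ⟨e3, e4⟩ := prim_abs_le hgi ht
    have m1 := mul_nonneg hCH e1
    have m2 := mul_nonneg hδ.le e3
    have m3 := mul_le_mul_of_nonneg_left (e2.trans herr) hCH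
    have m4 := mul_le_mul_of_nonneg_left (e4.trans hgC) hδ.le
    rw [e]
    constructor <;> nlinarith
  set Φ : Euc n × ℝ → ℝ := fun p => ψ p - z p.2 * h p with hΦ
  have hzs : ContDiff ℝ 2 (fun p : Euc n × ℝ => z p.2) := hz.comp contDiff_snd
  have hΦC : ContDiff ℝ 2 Φ := hψ.sub (hzs.mul hh)
  have hmaps : Set.MapsTo (fun p : Euc n × ℝ => p.2) N (Set.Ioo 0 T) := fun p hp => (hND hp).2
  have hcont : ContinuousOn (fun p : Euc n × ℝ => -Φ p + ∫ s in Set.Ioo 0 p.2, b' s) N :=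
    hΦC.continuous.neg.continuousOn.add ((prim_cont hb'i).comp continuous_snd.continuousOn hmaps)
  have husc2 := (husc.mono hND).add hcont.upperSemicontinuousOn
  obtain ⟨p, hpN, hpmax⟩ := husc2.exists_isMaxOn hNne hN
  have hpmax' : ∀ p' ∈ N, v p'.1 p'.2 - Φ p' + (∫ s in Set.Ioo 0 p'.2, b' s) ≤
      v p.1 p.2 - Φ p + (∫ s in Set.Ioo 0 p.2, b' s) := by
    intro p' hp'
    have := hpmax hp'
    simp only [Set.mem_ofPred_eq] at this
    linarith
  have hd : Differentiable ℝ Φ := hΦC.differentiable (by norm_num)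
  have hgrad : gradient (fun y => Φ (y, p.2)) p.1 = grS ψ p - z p.2 • grS h p := by
    rw [← grS_sub hψ hh (z p.2) p]
    have := gradient_slice (ψ := fun p' => ψ p' - z p.2 * h p')
      ((hψ.sub (contDiff_const.mul hh)).differentiable (by norm_num)) p.1 p.2
    exact this
  have hhess : (symHess n (fun y => Φ (y, p.2)) p.1).1 = hsS ψ p - z p.2 • hsS h p := by
    rw [← hsS_sub hψ hh (z p.2) p]
    have := hess_slice (ψ := fun p' => ψ p' - z p.2 * h p')
      (hψ.sub (contDiff_const.mul hh)) p.1 p.2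
    exact this
  have hdt : deriv (fun s => Φ (p.1, s)) p.2 =
      dtS ψ p - (g p.2 * h p + z p.2 * dtS h p) := by
    have h1 : HasDerivAt (fun s : ℝ => (p.1, s)) ((0 : Euc n), (1:ℝ)) p.2 :=
      (hasDerivAt_const p.2 p.1).prodMk (hasDerivAt_id p.2)
    have h2 := ((hψ.differentiable (by norm_num)) (p.1, p.2)).hasFDerivAt.comp_hasDerivAt p.2 h1
    have h3 := ((hh.differentiable (by norm_num)) (p.1, p.2)).hasFDerivAt.comp_hasDerivAt p.2 h1
    exact (h2.sub ((hzg p.2).mul h3)).deriv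
  obtain ⟨a1, a2, a3, a4, a5⟩ := hA p hpN
  refine ⟨p, hpN, gradient (fun y => Φ (y, p.2)) p.1, symHess n (fun y => Φ (y, p.2)) p.1,
    ?_, ?_, ?_, ?_⟩
  · rw [hgrad]; simpa using a3
  · rw [hhess]; simpa using a4
  · intro p' hp'
    have h1 := hpmax' p' hp'
    have h2 := hB' p.2 (hND hpN).2
    have h3 := hB' p'.2 (hND hp').2
    have h4 := abs_lt.1 (hA p' hp').1
    have h5 := abs_lt.1 a1
    simp only [hΦ] at h1
    nlinarith [h2.1, h3.2, h4.1, h5.2]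
  · intro hpint hpI hpU
    set G' : Euc n → ℝ → ℝ → Euc n → SymMat n → ℝ :=
      fun y s r q M => G y s r q M + g s * h (y, s) with hG'
    have hG'c : Continuous (fun q : Euc n × ℝ × ℝ × Euc n × SymMat n =>
        G' q.1 q.2.1 q.2.2.1 q.2.2.2.1 q.2.2.2.2) := by
      have := hh.continuous
      simp only [hG']
      exact hG.add (by fun_prop)
    have hmem : (p.1, p.2) ∈ Ω ×ˢ Set.Ioo 0 T := hND hpN
    have hfin := hvisc Φ hΦC b' hb'i G' hG'c p.1 p.2 hmem ?_ ?_
    · rw [hdt] at hfin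
      simp only [hG'] at hfin
      have := (abs_lt.1 a2).2
      have e : h (p.1, p.2) = h p := rfl
      rw [e] at hfin
      linarith
    · have hop : ∀ᶠ x : (Euc n × ℝ × Euc n × SymMat n) × ℝ in
          𝓝 ((p.1, v p.1 p.2, gradient (fun y => Φ (y, p.2)) p.1,
            symHess n (fun y => Φ (y, p.2)) p.1), p.2),
          x.1 ∈ U ∧ x.2 ∈ I ∧ |H x.1.2.2.1 - h (x.1.1, x.2)| < δ := by
        refine Filter.Eventually.and ?_ (Filter.Eventually.and ?_ ?_)
        · exact continuous_fst.continuousAt.eventually (hU.mem_nhds hpU)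
        · exact continuous_snd.continuousAt.eventually (hI.mem_nhds hpI)
        · have := hh.continuous
          have hc : Continuous (fun x : (Euc n × ℝ × Euc n × SymMat n) × ℝ =>
            |H x.1.2.2.1 - h (x.1.1, x.2)|) := by fun_prop
          refine (hc.tendsto _).eventually_lt_const ?_
          simp only [hgrad]
          exact a5
      rw [nhds_prod_eq] at hop
      obtain ⟨P, hP, Q, hQ, hPQ⟩ := eventually_prod_iff.1 hop
      refine ⟨{x | P x}, hP, {s | Q s}, hQ, ?_⟩
      filter_upwards [hFG] with s hs hsQ y r q M hM
      obtain ⟨x1, x2, x3⟩ := hPQ hM hsQ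
      have y1 := hs x2 y r q M x1
      have y2 := hUH y r q M x1
      simp only at x3
      simp only [hb', hG']
      have k1 : -(CH * |a s - w' s - g s|) ≤ (a s - w' s - g s) * H q := by
        have : |(a s - w' s - g s) * H q| ≤ CH * |a s - w' s - g s| := by
          rw [abs_mul, mul_comm]; gcongr
        linarith [(abs_le.1 this).1]
      have k2 : -(δ * |g s|) ≤ g s * (H q - h (y, s)) := by
        have : |g s * (H q - h (y, s))| ≤ δ * |g s| := by
          rw [abs_mul, mul_comm]; gcongr
        linarith [(abs_le.1 this).1]
      nlinarith
    · have : ∀ᶠ p' in 𝓝[Ω ×ˢ Set.Ioo 0 T] (p.1, p.2), p' ∈ N :=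
        mem_nhdsWithin_of_mem_nhds (mem_interior_iff_mem_nhds.1 hpint)
      filter_upwards [this] with p' hp'
      exact hpmax' p' hp'

/-- stability for the approximate stochastic pde
`u^ε_t + F(x,t,u^ε,Du^ε,D²u^ε) + ẇ_ε(t) H(Du^ε) = 0` when `‖ẇ_ε‖_{L¹}` is uniformly bounded
and `w_ε → w` uniformly, `w` absolutely continuous with `ẇ ∈ L¹(0,T)`:
the half-relaxed upper limit is an L¹-viscosity subsolution of
`u_t + F(x,t,u,Du,D²u) + ẇ(t) H(Du) = 0`. -/
theorem stability_stochastic_pde_subsolution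
    (n : ℕ) (T : ℝ) (hT : 0 < T) (Ω : Set (Euc n)) (hΩ : IsOpen Ω)
    (F : Euc n → ℝ → ℝ → Euc n → SymMat n → ℝ)
    -- F is degenerate elliptic, continuous in (x,r,p,X) for a.e. t, L¹ in t,
    -- and satisfies property (M)
    (hell : DegenerateElliptic n T F)
    (hcont : ∀ᵐ t ∂(volume.restrict (Set.Ioo 0 T)),
      Continuous (fun q : Euc n × ℝ × Euc n × SymMat n => F q.1 t q.2.1 q.2.2.1 q.2.2.2))
    (hint : ∀ x r p X, IntegrableOn (fun t => F x t r p X) (Set.Ioo 0 T))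
    (hFM : PropM n T Ω F)
    -- H is locally Lipschitz continuous
    (H : Euc n → ℝ) (hH : LocallyLipschitz H)
    -- the w_ε are C¹ on [0,T] with derivatives ẇ_ε = we' ε ...
    (we : ℝ → ℝ → ℝ) (we' : ℝ → ℝ → ℝ)
    (hC1 : ∀ ε > (0:ℝ), ContinuousOn (we' ε) (Set.Icc 0 T) ∧
      ∀ t ∈ Set.Icc 0 T, HasDerivWithinAt (we ε) (we' ε t) (Set.Icc 0 T) t)
    -- ... with ‖ẇ_ε‖_{L¹(0,T)} uniformly bounded in ε ...
    (hL1bd : ∃ C : ℝ, ∀ ε > (0:ℝ), ∫ s in Set.Ioo 0 T, |we' ε s| ≤ C)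
    -- ... converging uniformly on [0,T] to w ...
    (w : ℝ → ℝ)
    (hconv : TendstoUniformlyOn we w (𝓝[>] (0:ℝ)) (Set.Icc 0 T))
    -- ... where w is absolutely continuous with derivative ẇ = w' ∈ L¹(0,T)
    (w' : ℝ → ℝ) (hw'int : IntegrableOn w' (Set.Ioo 0 T))
    (hAC : ∀ t ∈ Set.Icc 0 T, w t = w 0 + ∫ s in (0:ℝ)..t, w' s)
    -- (u^ε) locally uniformly bounded L¹-viscosity subsolutions of the approximate equations
    (u : ℝ → Euc n → ℝ → ℝ)
    (hbd : LocUnifBounded n (Ω ×ˢ Set.Ioo 0 T) u)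
    (hsub : ∀ ε > (0:ℝ), IsL1Subsolution n T Ω
      (fun x t r p X => F x t r p X + we' ε t * H p) (u ε)) :
    IsL1Subsolution n T Ω (fun x t r p X => F x t r p X + w' t * H p)
      (limsupStar n (Ω ×ˢ Set.Ioo 0 T) u) := by
  have hHc : Continuous H := hH.continuous
  set D : Set (Euc n × ℝ) := Ω ×ˢ Set.Ioo 0 T with hDdef
  have hD : IsOpen D := hΩ.prod isOpen_Ioo
  refine ⟨ls_usc hD hbd, ?_⟩
  intro φ hφ b hb G hG x₀ t₀ hmem hFG0 hmax
  obtain ⟨U, hU, I, hI, hFG⟩ := hFG0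
  set p₀ : Euc n × ℝ := (x₀, t₀) with hp₀
  set ub : Euc n × ℝ → ℝ := fun p => limsupStar n D u p.1 p.2 with hub
  set ψ : Euc n × ℝ → ℝ := fun p => φ p + pen p₀ p ^ 2 with hψdef
  have hψ : ContDiff ℝ 2 ψ := hφ.add ((pen_contDiff p₀).pow 2)
  obtain ⟨j1, j2, j3⟩ := penalized_jet hφ p₀
  have hφd : Differentiable ℝ φ := hφ.differentiable (by norm_num)
  have e1 : gradient (fun y => φ (y, t₀)) x₀ = grS ψ p₀ := by
    rw [gradient_slice hφd]; exact j1.symm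
  have e2 : deriv (fun s => φ (x₀, s)) t₀ = dtS ψ p₀ := by
    rw [deriv_slice hφd]; exact j2.symm
  have e3 : (symHess n (fun y => φ (y, t₀)) x₀).1 = hsS ψ p₀ := by
    rw [hess_slice hφ]; exact j3.symm
  set X₀ : SymMat n := symHess n (fun y => φ (y, t₀)) x₀ with hX₀
  rw [e1] at hU ⊢
  rw [e2]
  set q₀ : Euc n := grS ψ p₀ with hq₀
  -- compact neighbourhood
  have hmax' : ∀ᶠ p in 𝓝 p₀, ub p - φ p + (∫ s in Set.Ioo 0 p.2, b s) ≤
      ub p₀ - φ p₀ + (∫ s in Set.Ioo 0 p₀.2, b s) := by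
    have := hmax
    unfold IsLocalMaxOn IsMaxFilter at this
    rw [hD.nhdsWithin_eq hmem] at this
    exact this
  obtain ⟨N, hN, hpN, hNsub⟩ := exists_compact_subset (isOpen_interior)
    (mem_interior_iff_mem_nhds.2 (Filter.inter_mem hmax' (hD.mem_nhds hmem)))
  have hNsub' := hNsub.trans interior_subset
  have hND : N ⊆ D := fun p hp => (hNsub' hp).2
  have hp₀N : p₀ ∈ N := interior_subset hpN
  -- open neighbourhoods
  set CH : ℝ := |H q₀| + 1 with hCH
  have hCH0 : 0 ≤ CH := by positivity
  set U' : Set (Euc n × ℝ × Euc n × SymMat n) := interior U ∩ {x | |H x.2.2.1| < CH} with hU'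
  have hU'o : IsOpen U' := by
    refine isOpen_interior.inter (isOpen_lt ?_ continuous_const)
    fun_prop
  have hU'mem : (x₀, ub p₀, q₀, X₀) ∈ U' :=
    ⟨mem_interior_iff_mem_nhds.2 hU, by simp [hCH]⟩
  have hFG' : ∀ᵐ s ∂(volume : Measure ℝ), s ∈ interior I → ∀ y r q M, (y, r, q, M) ∈ U' →
      b s + G y s r q M ≤ F y s r q M + w' s * H q := by
    filter_upwards [hFG] with s hs hsI y r q M hM
    exact hs (interior_subset hsI) y r q M (interior_subset hM.1)
  obtain ⟨C₀, hC₀, hwe⟩ := we_approx we we' hC1 hL1bd w hconv w' hw'int hAC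
  set B : ℝ → ℝ := fun t => ∫ s in Set.Ioo 0 t, b s with hB
  have step : ∀ δ : ℝ, 0 < δ → ∃ ε : ℝ, 0 < ε ∧ ε < δ ∧ ∃ y ∈ N, dist y p₀ < δ ∧
      ub p₀ - δ < u ε y.1 y.2 ∧
      ∃ p ∈ N, ∃ q : Euc n, ∃ M : SymMat n, ‖q - grS ψ p‖ < δ ∧ ‖M.1 - hsS ψ p‖ < δ ∧
      (∀ p' ∈ N, u ε p'.1 p'.2 - ψ p' + B p'.2 ≤
        u ε p.1 p.2 - ψ p + B p.2 + (CH + C₀ + 2) * δ) ∧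
      (p ∈ interior N → p.2 ∈ interior I → (p.1, u ε p.1 p.2, q, M) ∈ U' →
        dtS ψ p + G p.1 p.2 (u ε p.1 p.2) q M ≤ δ) := by
    intro δ hδ
    obtain ⟨h, hh, τ, hτ, hA⟩ := h_approx hψ hHc hN hδ
    have hτ' : 0 < min τ (min δ (1/2)) := by positivity
    have hτ1 : min τ (min δ (1/2)) < 1 :=
      lt_of_le_of_lt ((min_le_right _ _).trans (min_le_right _ _)) (by norm_num)
    have ev1 := hwe _ hτ' hτ1
    have ev2 : ∀ᶠ ε in 𝓝[>] (0:ℝ), ε < δ := mem_nhdsWithin_of_mem_nhds (Iio_mem_nhds hδ)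
    have ev3 : ∀ᶠ y in 𝓝[D] p₀, y ∈ N ∧ dist y p₀ < δ :=
      mem_nhdsWithin_of_mem_nhds (Filter.inter_mem (mem_interior_iff_mem_nhds.1 hpN)
        (Metric.ball_mem_nhds p₀ hδ))
    have fr := ls_frequently_gt hD hbd (p := p₀) hmem (c := ub p₀ - δ)
      (by simp only [hub]; linarith)
    obtain ⟨⟨ε, y⟩, hy1, ⟨hy2, hy3⟩, hy4, hy5⟩ :=
      (fr.and_eventually ((ev1.and ev2).prod_mk ev3)).exists
    obtain ⟨hε, hai, g, z, hz, hg, hzg, hgi, herr, hgC, hzs⟩ := hy2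
    refine ⟨ε, hε, hy3, y, hy4, hy5, hy1, ?_⟩
    refine visc_step hHc hai hw'int hg hgi hz hzg (hsub ε hε) hN hND ⟨p₀, hp₀N⟩ hψ hh hδ hCH0
      (fun p hp => hA (z p.2) ((hzs p.2 (hND hp).2).trans_le (min_le_left _ _)) p hp)
      (herr.trans ((min_le_right _ _).trans (min_le_left _ _))) hgC hb hG hU'o
      (fun y r q M hM => le_of_lt hM.2) isOpen_interior hFG'
  have hδk : ∀ k : ℕ, (0:ℝ) < 1 / ((k:ℝ) + 1) := fun k => by positivity
  choose ε hε0 hεδ y hyN hyd hyu p hpN' q M hq hM hpm hpv using fun k : ℕ => step _ (hδk k)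
  obtain ⟨pb, hpb, σ, hσ, hpσ⟩ := hN.tendsto_subseq hpN'
  have hδ0 : Tendsto (fun k => 1 / (((σ k : ℕ):ℝ) + 1)) atTop (𝓝 0) :=
    (tendsto_one_div_add_atTop_nhds_zero_nat (𝕜 := ℝ)).comp hσ.tendsto_atTop
  have hεt : Tendsto (fun k => ε (σ k)) atTop (𝓝[>] 0) := by
    refine tendsto_nhdsWithin_iff.2 ⟨?_, Eventually.of_forall fun k => hε0 _⟩
    exact squeeze_zero (fun k => (hε0 _).le) (fun k => (hεδ _).le) hδ0
  have hpt : Tendsto (fun k => p (σ k)) atTop (𝓝 pb) := hpσ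
  have hyt : Tendsto (fun k => y (σ k)) atTop (𝓝 p₀) := by
    rw [tendsto_iff_dist_tendsto_zero]
    exact squeeze_zero (fun k => dist_nonneg) (fun k => (hyd _).le) hδ0
  have hprod : Tendsto (fun k => (ε (σ k), p (σ k))) atTop ((𝓝[>] (0:ℝ)) ×ˢ 𝓝[D] pb) :=
    hεt.prodMk (tendsto_nhdsWithin_iff.2 ⟨hpt, Eventually.of_forall fun k => hND (hpN' _)⟩)
  have stepA : ∀ c, ub pb < c → ∀ᶠ k in atTop, u (ε (σ k)) (p (σ k)).1 (p (σ k)).2 < c :=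
    fun c hc => hprod.eventually (ls_eventually_lt hD hbd (hND hpb) hc)
  have hf0 : ContinuousOn (fun p : Euc n × ℝ => -ψ p + B p.2) D :=
    hψ.continuous.neg.continuousOn.add
      ((prim_cont hb).comp continuous_snd.continuousOn fun p hp => hp.2)
  have hfp : Tendsto (fun k => -ψ (p (σ k)) + B (p (σ k)).2) atTop (𝓝 (-ψ pb + B pb.2)) :=
    ((hf0.continuousAt (hD.mem_nhds (hND hpb))).tendsto.comp hpt)
  have hfy : Tendsto (fun k => -ψ (y (σ k)) + B (y (σ k)).2) atTop (𝓝 (-ψ p₀ + B p₀.2)) :=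
    ((hf0.continuousAt (hD.mem_nhds hmem)).tendsto.comp hyt)
  have hL : Tendsto (fun k => ub p₀ - 1 / (((σ k : ℕ):ℝ) + 1) + (-ψ (y (σ k)) + B (y (σ k)).2)
      - (-ψ (p (σ k)) + B (p (σ k)).2) - (CH + C₀ + 2) * (1 / (((σ k : ℕ):ℝ) + 1))) atTop
      (𝓝 (ub p₀ - 0 + (-ψ p₀ + B p₀.2) - (-ψ pb + B pb.2) - (CH + C₀ + 2) * 0)) :=
    (((tendsto_const_nhds.sub hδ0).add hfy).sub hfp).sub (hδ0.const_mul _)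
  have hLle : ∀ k, ub p₀ - 1 / (((σ k : ℕ):ℝ) + 1) + (-ψ (y (σ k)) + B (y (σ k)).2)
      - (-ψ (p (σ k)) + B (p (σ k)).2) - (CH + C₀ + 2) * (1 / (((σ k : ℕ):ℝ) + 1)) ≤
      u (ε (σ k)) (p (σ k)).1 (p (σ k)).2 := by
    intro k
    have h1 := hpm (σ k) (y (σ k)) (hyN _)
    have h2 := hyu (σ k)
    linarith
  have hle : ub p₀ - 0 + (-ψ p₀ + B p₀.2) - (-ψ pb + B pb.2) - (CH + C₀ + 2) * 0 ≤ ub pb := by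
    refine le_of_forall_gt fun c hc => ?_
    obtain ⟨c', hc1, hc2⟩ := exists_between hc
    refine lt_of_le_of_lt ?_ hc2
    refine le_of_tendsto hL ?_
    filter_upwards [stepA c' hc1] with k hk
    exact (hLle k).trans hk.le
  have hpb0 : pb = p₀ := by
    have h1 : ub pb - φ pb + B pb.2 ≤ ub p₀ - φ p₀ + B p₀.2 := (hNsub' hpb).1
    have h2 : ψ pb = φ pb + pen p₀ pb ^ 2 := rfl
    have h3 : ψ p₀ = φ p₀ := by simp [hψdef, pen_self]
    have h4 : pen p₀ pb ^ 2 ≤ 0 := by linarith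
    have h5 : pen p₀ pb = 0 := by
      have := sq_nonneg (pen p₀ pb)
      have h6 : pen p₀ pb ^ 2 = 0 := le_antisymm h4 this
      simpa using h6
    exact pen_eq_zero h5.le
  subst hpb0
  have hut : Tendsto (fun k => u (ε (σ k)) (p (σ k)).1 (p (σ k)).2) atTop (𝓝 (ub p₀)) := by
    rw [tendsto_order]
    refine ⟨fun c hc => ?_, stepA⟩
    have : c < ub p₀ - 0 + (-ψ p₀ + B p₀.2) - (-ψ p₀ + B p₀.2) - (CH + C₀ + 2) * 0 := by
      linarith
    filter_upwards [hL.eventually_const_lt this] with k hk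
    exact hk.trans_le (hLle k)
  have hqt : Tendsto (fun k => q (σ k)) atTop (𝓝 q₀) := by
    have h1 : Tendsto (fun k => q (σ k) - grS ψ (p (σ k))) atTop (𝓝 0) :=
      squeeze_zero_norm (fun k => (hq _).le) hδ0
    have h2 := h1.add (((grS_cont hψ).tendsto p₀).comp hpt)
    simpa using h2
  have hMt : Tendsto (fun k => M (σ k)) atTop (𝓝 X₀) := by
    rw [tendsto_subtype_rng, e3]
    have h1 : Tendsto (fun k => (M (σ k)).1 - hsS ψ (p (σ k))) atTop (𝓝 0) :=
      squeeze_zero_norm (fun k => (hM _).le) hδ0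
    have h2 := h1.add (((hsS_cont hψ).tendsto p₀).comp hpt)
    simpa using h2
  have hp1 : Tendsto (fun k => (p (σ k)).1) atTop (𝓝 x₀) := (continuous_fst.tendsto _).comp hpt
  have hp2 : Tendsto (fun k => (p (σ k)).2) atTop (𝓝 t₀) := (continuous_snd.tendsto _).comp hpt
  have evU : ∀ᶠ k in atTop,
      ((p (σ k)).1, u (ε (σ k)) (p (σ k)).1 (p (σ k)).2, q (σ k), M (σ k)) ∈ U' :=
    (hp1.prodMk_nhds (hut.prodMk_nhds (hqt.prodMk_nhds hMt))).eventually (hU'o.mem_nhds hU'mem)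
  have evI : ∀ᶠ k in atTop, (p (σ k)).2 ∈ interior I :=
    hp2.eventually (isOpen_interior.mem_nhds (mem_interior_iff_mem_nhds.2 hI))
  have evN : ∀ᶠ k in atTop, p (σ k) ∈ interior N :=
    hpt.eventually (isOpen_interior.mem_nhds hpN)
  have hGt : Tendsto (fun k => dtS ψ (p (σ k)) + G (p (σ k)).1 (p (σ k)).2
      (u (ε (σ k)) (p (σ k)).1 (p (σ k)).2) (q (σ k)) (M (σ k))) atTop
      (𝓝 (dtS ψ p₀ + G x₀ t₀ (ub p₀) q₀ X₀)) := by
    refine (((dtS_cont hψ).tendsto p₀).comp hpt).add ?_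
    exact (hG.tendsto (x₀, t₀, ub p₀, q₀, X₀)).comp
      (hp1.prodMk_nhds (hp2.prodMk_nhds (hut.prodMk_nhds (hqt.prodMk_nhds hMt))))
  refine le_of_tendsto_of_tendsto hGt hδ0 ?_
  filter_upwards [evU, evI, evN] with k k1 k2 k3
  exact hpv (σ k) k3 k2 k1
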